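/- arXiv:1208.3811 — 2 statements merged into one kernel-verified Lean document; each statement's English description precedes it below -/
import Mathlib

section
/- Let 𝒳 and 𝒲 be standard Borel spaces, R a probability measure on 𝒲, and f : 𝒳 × 𝒲 → 𝒳 measurable with t-step transition maps F_t. For t ≥ 1 and probability measures Φ, Ψ on 𝒳, define the minimum required conditional relative entropy supply J_t(Φ, Ψ) := inf { ∫_𝒳 D(κ(x) ‖ R^{⊗t}) dΦ(x) : κ a Markov kernel from 𝒳 to 𝒲^t with κ(x) ≪ R^{⊗t} for Φ-a.e. x and (Φ ⊗ κ) ∘ F_t⁻¹ = Ψ }, valued in [0,∞] with inf ∅ = ∞. Then for any 0 < s < t and any probability measures Φ, Ψ on 𝒳: J_t(Φ, Ψ) = inf_Θ ( J_s(Φ, Θ) + J_{t-s}(Θ, Ψ) ), where the infimum is taken over all probability measures Θ on 𝒳. -/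
open MeasureTheory ProbabilityTheory
open scoped ENNReal ProbabilityTheory Classical

/-- Kullback-Leibler divergence `D(P ‖ Q)`, valued in `[0,∞]`.  For probability measures with
`P ≪ Q` it equals `∫ log (dP/dQ) dP`, computed here in the equivalent nonnegative form
`∫⁻ (φ log φ - φ + 1) dQ` where `φ = dP/dQ`; it is `∞` when `¬ P ≪ Q`. -/
noncomputable def klDiv {α : Type*} [MeasurableSpace α] (P Q : Measure α) : ℝ≥0∞ :=
  if P ≪ Q then
    ∫⁻ x, ENNReal.ofReal ((P.rnDeriv Q x).toReal * Real.log (P.rnDeriv Q x).toReal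
      - (P.rnDeriv Q x).toReal + 1) ∂Q
  else ∞

/-- The `t`-step state transition maps: `F 0 (x, _) = x` and
`F (k+1) (x, w₀, …, w_k) = f (F k (x, w₀, …, w_{k-1}), w_k)`. -/
def stateTrans {𝒳 𝒲 : Type*} (f : 𝒳 × 𝒲 → 𝒳) : (t : ℕ) → 𝒳 × (Fin t → 𝒲) → 𝒳
  | 0, p => p.1
  | t + 1, p => f (stateTrans f t (p.1, fun i => p.2 i.castSucc), p.2 (Fin.last t))

/-- The minimum required conditional relative entropy supply to drive the state distribution
from `Φ` to `Ψ` under the transition map `F : 𝒳 × 𝒱 → 𝒳` (for `J_t` take `𝒱 = 𝒲^t`,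
`F = F_t` and `Rt = R^{⊗t}`): the infimum over all Markov kernels `κ` with `κ x ≪ Rt` for
`Φ`-a.e. `x` and `(Φ ⊗ κ) ∘ F⁻¹ = Ψ` of `∫ D(κ(x) ‖ Rt) dΦ(x)`, with `inf ∅ = ∞`. -/
noncomputable def reqSupply {𝒳 𝒱 : Type*} [MeasurableSpace 𝒳] [MeasurableSpace 𝒱]
    (F : 𝒳 × 𝒱 → 𝒳) (Rt : Measure 𝒱) (Φ Ψ : Measure 𝒳) : ℝ≥0∞ :=
  ⨅ (κ : Kernel 𝒳 𝒱) (_ : IsMarkovKernel κ) (_ : ∀ᵐ x ∂Φ, κ x ≪ Rt)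
    (_ : (Φ ⊗ₘ κ).map F = Ψ), ∫⁻ x, klDiv (κ x) Rt ∂Φ

/-!
By the chain rule, the conditional cost `∫ D(κ x ‖ R) dΦ(x)` is the divergence of the joint law
`Φ ⊗ κ` from `Φ ⊗ R`, so `reqSupply F R Φ Ψ` is the least divergence from `Φ ⊗ R` of a joint law of
initial state and noise that drives `Φ` to `Ψ`. For a system made of two stages in series, the chain
rule splits the divergence of a joint law of initial state, first and second noise into the cost of
the first stage and the cost of the second noise given the whole past. Two couplings that share an
intermediate state law can be glued so that the second noise depends on the past only through the
intermediate state, which gives `≤`. Conversely, by the data-processing inequality, forgetting the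
past except for the intermediate state cannot increase the second cost, which gives `≥`.
-/

open InformationTheory (klFun)

section KernelDivergence

variable {α β : Type*} [MeasurableSpace α] [MeasurableSpace β]
  [MeasurableSpace.CountableOrCountablyGenerated α β]

lemma compProd_eq_withDensity_kernel_rnDeriv {μ : Measure α} [SFinite μ] {κ η : Kernel α β}
    [IsFiniteKernel κ] [IsFiniteKernel η] (hκη : ∀ᵐ a ∂μ, κ a ≪ η a) :
    μ ⊗ₘ κ = (μ ⊗ₘ η).withDensity (fun p ↦ κ.rnDeriv η p.1 p.2) := by
  have hκ : κ =ᵐ[μ] η.withDensity (κ.rnDeriv η) := by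
    filter_upwards [hκη] with a ha using (Kernel.withDensity_rnDeriv_eq ha).symm
  rw [Measure.compProd_congr hκ, Measure.compProd_withDensity (κ.measurable_rnDeriv η)]

lemma rnDeriv_compProd_right {μ : Measure α} [IsFiniteMeasure μ] {κ η : Kernel α β}
    [IsFiniteKernel κ] [IsFiniteKernel η] (hκη : ∀ᵐ a ∂μ, κ a ≪ η a) :
    (μ ⊗ₘ κ).rnDeriv (μ ⊗ₘ η) =ᵐ[μ ⊗ₘ η] fun p ↦ κ.rnDeriv η p.1 p.2 := by
  rw [compProd_eq_withDensity_kernel_rnDeriv hκη]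
  exact Measure.rnDeriv_withDensity _ (κ.measurable_rnDeriv η)

lemma klDiv_apply_eq_lintegral_klFun_rnDeriv {κ η : Kernel α β} [IsFiniteKernel κ]
    [IsFiniteKernel η] {a : α} (ha : κ a ≪ η a) :
    InformationTheory.klDiv (κ a) (η a)
      = ∫⁻ b, ENNReal.ofReal (klFun (κ.rnDeriv η a b).toReal) ∂η a := by
  rw [InformationTheory.klDiv_eq_lintegral_klFun_of_ac ha]
  refine lintegral_congr_ae ?_
  filter_upwards [Kernel.rnDeriv_eq_rnDeriv_measure (κ := κ) (η := η) (a := a)] with b hb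
  rw [hb]

lemma measurable_klFun_rnDeriv (κ η : Kernel α β) :
    Measurable fun p : α × β ↦ ENNReal.ofReal (klFun (κ.rnDeriv η p.1 p.2).toReal) :=
  (InformationTheory.measurable_klFun.comp (κ.measurable_rnDeriv η).ennreal_toReal).ennreal_ofReal

lemma measurable_klDiv_apply (κ η : Kernel α β) [IsFiniteKernel κ] [IsFiniteKernel η] :
    Measurable fun a ↦ InformationTheory.klDiv (κ a) (η a) := by
  have heq : (fun a ↦ InformationTheory.klDiv (κ a) (η a)) = fun a ↦ if κ a ≪ η a then
      ∫⁻ b, ENNReal.ofReal (klFun (κ.rnDeriv η a b).toReal) ∂η a else ∞ := by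
    ext a
    split_ifs with ha
    · exact klDiv_apply_eq_lintegral_klFun_rnDeriv ha
    · exact InformationTheory.klDiv_of_not_ac ha
  rw [heq]
  refine Measurable.ite (Kernel.measurableSet_absolutelyContinuous κ η) ?_ measurable_const
  exact (measurable_klFun_rnDeriv κ η).lintegral_kernel_prod_right'

theorem lintegral_klDiv_eq_klDiv_compProd (μ : Measure α) [IsFiniteMeasure μ] (κ η : Kernel α β)
    [IsFiniteKernel κ] [IsFiniteKernel η] :
    ∫⁻ a, InformationTheory.klDiv (κ a) (η a) ∂μ
      = InformationTheory.klDiv (μ ⊗ₘ κ) (μ ⊗ₘ η) := by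
  by_cases hκη : ∀ᵐ a ∂μ, κ a ≪ η a
  · calc ∫⁻ a, InformationTheory.klDiv (κ a) (η a) ∂μ
      _ = ∫⁻ a, ∫⁻ b, ENNReal.ofReal (klFun (κ.rnDeriv η a b).toReal) ∂η a ∂μ := by
        refine lintegral_congr_ae ?_
        filter_upwards [hκη] with a ha using klDiv_apply_eq_lintegral_klFun_rnDeriv ha
      _ = ∫⁻ p, ENNReal.ofReal (klFun (κ.rnDeriv η p.1 p.2).toReal) ∂(μ ⊗ₘ η) :=
        (Measure.lintegral_compProd (measurable_klFun_rnDeriv κ η)).symm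
      _ = ∫⁻ p, ENNReal.ofReal (klFun ((μ ⊗ₘ κ).rnDeriv (μ ⊗ₘ η) p).toReal) ∂(μ ⊗ₘ η) := by
        refine lintegral_congr_ae ?_
        filter_upwards [rnDeriv_compProd_right hκη] with p hp
        rw [hp]
      _ = InformationTheory.klDiv (μ ⊗ₘ κ) (μ ⊗ₘ η) :=
        (InformationTheory.klDiv_eq_lintegral_klFun_of_ac (.compProd_right hκη)).symm
  · rw [InformationTheory.klDiv_of_not_ac
      (mt Measure.absolutelyContinuous_compProd_right_iff.mp hκη)]
    contrapose! hκη with hfinite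
    filter_upwards [ae_lt_top (measurable_klDiv_apply κ η) hfinite] with a ha
    exact (InformationTheory.klDiv_ne_top_iff.mp ha.ne).1

lemma klDiv_compProd_comap {γ : Type*} [MeasurableSpace γ]
    [MeasurableSpace.CountableOrCountablyGenerated γ β] (μ : Measure γ) [IsFiniteMeasure μ]
    {g : γ → α} (hg : Measurable g) (κ η : Kernel α β) [IsFiniteKernel κ] [IsFiniteKernel η] :
    InformationTheory.klDiv (μ ⊗ₘ κ.comap g hg) (μ ⊗ₘ η.comap g hg)
      = InformationTheory.klDiv (μ.map g ⊗ₘ κ) (μ.map g ⊗ₘ η) := by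
  simp only [← lintegral_klDiv_eq_klDiv_compProd, Kernel.comap_apply,
    lintegral_map (measurable_klDiv_apply κ η) hg]

end KernelDivergence

section JointMeasures

variable {α β γ : Type*} [MeasurableSpace α] [MeasurableSpace β] [MeasurableSpace γ]

lemma klDiv_map_measurableEquiv (μ ν : Measure α) [IsFiniteMeasure μ] [IsFiniteMeasure ν]
    (e : α ≃ᵐ β) :
    InformationTheory.klDiv (μ.map e) (ν.map e) = InformationTheory.klDiv μ ν := by
  refine le_antisymm (InformationTheory.klDiv_map_le μ ν e.measurable) ?_
  simpa only [MeasurableEquiv.map_symm_map] using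
    InformationTheory.klDiv_map_le (μ.map e) (ν.map e) e.symm.measurable

lemma map_prodMap_compProd_comap (μ : Measure γ) [SFinite μ] {g : γ → α} (hg : Measurable g)
    (κ : Kernel α β) [IsSFiniteKernel κ] :
    (μ ⊗ₘ κ.comap g hg).map (Prod.map g id) = μ.map g ⊗ₘ κ := by
  have hg_id : Measurable (Prod.map g id : γ × β → α × β) := hg.prodMap measurable_id
  ext s hs
  rw [Measure.map_apply hg_id hs, Measure.compProd_apply (hg_id hs), Measure.compProd_apply hs,
    lintegral_map (Kernel.measurable_kernel_prodMk_left hs) hg]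
  rfl

lemma klDiv_prod_eq_add [StandardBorelSpace β] [Nonempty β] (ρ : Measure (α × β))
    [IsFiniteMeasure ρ] (μ : Measure α) [IsFiniteMeasure μ] (ν : Measure β)
    [IsProbabilityMeasure ν] :
    InformationTheory.klDiv ρ (μ.prod ν)
      = InformationTheory.klDiv ρ.fst μ + InformationTheory.klDiv ρ (ρ.fst.prod ν) := by
  simpa only [Measure.disintegrate, Measure.compProd_const] using
    InformationTheory.klDiv_compProd_eq_add ρ.fst μ ρ.condKernel (Kernel.const α ν)

lemma isFiniteMeasure_of_fst {ρ : Measure (α × β)} [IsFiniteMeasure ρ.fst] :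
    IsFiniteMeasure ρ :=
  ⟨Measure.fst_univ (ρ := ρ) ▸ measure_lt_top ρ.fst _⟩

lemma exists_gluing_klDiv_eq [StandardBorelSpace β] [Nonempty β] {π₁ : Measure γ}
    [IsFiniteMeasure π₁] {π₂ : Measure (α × β)} [IsFiniteMeasure π₂] {g : γ → α}
    (hg : Measurable g) (hπ : π₂.fst = π₁.map g) (ν : Measure β) [IsFiniteMeasure ν] :
    ∃ ρ : Measure (γ × β), IsFiniteMeasure ρ ∧ ρ.fst = π₁ ∧ ρ.map (Prod.map g id) = π₂ ∧
      InformationTheory.klDiv ρ (π₁.prod ν) = InformationTheory.klDiv π₂ (π₂.fst.prod ν) := by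
  refine ⟨π₁ ⊗ₘ π₂.condKernel.comap g hg, inferInstance, Measure.fst_compProd _ _, ?_, ?_⟩
  · rw [map_prodMap_compProd_comap, ← hπ, Measure.disintegrate]
  · have hconst : (Kernel.const α ν).comap g hg = Kernel.const γ ν := rfl
    simpa only [hconst, ← hπ, Measure.compProd_const, Measure.disintegrate] using
      klDiv_compProd_comap π₁ hg π₂.condKernel (Kernel.const α ν)

end JointMeasures

section RequiredSupply

variable {X V Ω : Type*} [MeasurableSpace X] [MeasurableSpace V] [MeasurableSpace Ω]

lemma klDiv_eq_informationTheory_klDiv (P Q : Measure V) [IsFiniteMeasure P] [IsFiniteMeasure Q] :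
    klDiv P Q = InformationTheory.klDiv P Q := by
  simp only [klDiv, InformationTheory.klDiv_eq_lintegral_klFun, InformationTheory.klFun_apply,
    sub_add_eq_add_sub]

theorem reqSupply_eq_iInf_klDiv [StandardBorelSpace V] (F : X × V → X) (R : Measure V)
    [IsProbabilityMeasure R] (Φ Ψ : Measure X) [IsFiniteMeasure Φ] :
    reqSupply F R Φ Ψ = ⨅ (π : Measure (X × V)) (_ : π.fst = Φ) (_ : π.map F = Ψ),
      InformationTheory.klDiv π (Φ.prod R) := by
  have hcost (κ : Kernel X V) [IsMarkovKernel κ] :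
      ∫⁻ x, klDiv (κ x) R ∂Φ = InformationTheory.klDiv (Φ ⊗ₘ κ) (Φ.prod R) := by
    simpa only [klDiv_eq_informationTheory_klDiv, Kernel.const_apply, Measure.compProd_const]
      using lintegral_klDiv_eq_klDiv_compProd Φ κ (Kernel.const X R)
  apply le_antisymm
  · refine le_iInf₂ fun π hfst ↦ le_iInf fun hπ ↦ ?_
    by_cases hac : π ≪ Φ.prod R
    swap
    · simp only [InformationTheory.klDiv_of_not_ac hac, le_top]
    have : Nonempty V := nonempty_of_isProbabilityMeasure R
    have : IsFiniteMeasure π.fst := by rwa [hfst]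
    have : IsFiniteMeasure π := isFiniteMeasure_of_fst
    have hdisint : Φ ⊗ₘ π.condKernel = π := hfst ▸ π.disintegrate π.condKernel
    have hcond : ∀ᵐ x ∂Φ, π.condKernel x ≪ R := by
      rw [← hdisint, ← Measure.compProd_const] at hac
      simpa only [Kernel.const_apply] using hac.kernel_of_compProd
    refine iInf₂_le_of_le π.condKernel inferInstance <|
      iInf₂_le_of_le hcond (by rw [hdisint, hπ]) ?_
    rw [hcost, hdisint]
  · refine le_iInf₂ fun κ _ ↦ le_iInf₂ fun _ hκ ↦ ?_
    rw [hcost]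
    exact iInf₂_le_of_le (Φ ⊗ₘ κ) (Measure.fst_compProd Φ κ) <| iInf_le_of_le hκ le_rfl

lemma reqSupply_eq_iInf_klDiv_of_measurableEquiv [StandardBorelSpace V] {F : X × V → X}
    (hF : Measurable F) (R : Measure V) [IsProbabilityMeasure R] (Φ Ψ : Measure X)
    [IsFiniteMeasure Φ] (E : Ω ≃ᵐ X × V) {μ : Measure Ω} [IsFiniteMeasure μ]
    (hE : MeasurePreserving E μ (Φ.prod R)) :
    reqSupply F R Φ Ψ = ⨅ (ρ : Measure Ω) (_ : ρ.map (Prod.fst ∘ E) = Φ) (_ : ρ.map (F ∘ E) = Ψ),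
      InformationTheory.klDiv ρ μ := by
  have hsurj : Function.Surjective (Measure.map E) := fun π ↦ ⟨π.map E.symm, E.map_map_symm⟩
  rw [reqSupply_eq_iInf_klDiv]
  refine (hsurj.iInf_congr _ fun ρ ↦ ?_).symm
  rw [Measure.fst, Measure.map_map measurable_fst E.measurable, Measure.map_map hF E.measurable]
  refine iInf_congr fun hfst ↦ iInf_congr fun _ ↦ ?_
  have : IsFiniteMeasure (ρ.map (Prod.fst ∘ E)) := by rwa [hfst]
  have : IsFiniteMeasure ρ :=
    Measure.isFiniteMeasure_of_map (measurable_fst.comp E.measurable).aemeasurable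
  rw [← hE.map_eq, klDiv_map_measurableEquiv]

end RequiredSupply

section Series

variable {X V V₁ V₂ : Type*} [MeasurableSpace X] [MeasurableSpace V] [MeasurableSpace V₁]
  [MeasurableSpace V₂] {F : X × V → X} {F₁ : X × V₁ → X} {F₂ : X × V₂ → X} {e : V₁ × V₂ ≃ᵐ V}
  {R : Measure V} {R₁ : Measure V₁} {R₂ : Measure V₂}
  [IsProbabilityMeasure R] [IsProbabilityMeasure R₁] [IsProbabilityMeasure R₂]

lemma reqSupply_series_eq_iInf_klDiv [StandardBorelSpace V]
    (he : MeasurePreserving e (R₁.prod R₂) R) (hF₁ : Measurable F₁) (hF₂ : Measurable F₂)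
    (hseries : ∀ x v₁ v₂, F (x, e (v₁, v₂)) = F₂ (F₁ (x, v₁), v₂))
    (Φ Ψ : Measure X) [IsFiniteMeasure Φ] :
    reqSupply F R Φ Ψ = ⨅ (ρ : Measure ((X × V₁) × V₂)) (_ : ρ.fst.fst = Φ)
      (_ : (ρ.map (Prod.map F₁ id)).map F₂ = Ψ),
      InformationTheory.klDiv ρ ((Φ.prod R₁).prod R₂) := by
  let E : (X × V₁) × V₂ ≃ᵐ X × V :=
    MeasurableEquiv.prodAssoc.trans ((MeasurableEquiv.refl X).prodCongr e)
  have hE : MeasurePreserving E ((Φ.prod R₁).prod R₂) (Φ.prod R) :=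
    ((MeasurePreserving.id Φ).prod he).comp (measurePreserving_prodAssoc Φ R₁ R₂)
  have hFE : F ∘ E = F₂ ∘ Prod.map F₁ id := funext fun p ↦ hseries p.1.1 p.1.2 p.2
  have hF : Measurable F := by
    rw [← E.measurable_comp_iff, hFE]
    fun_prop
  have hfst (ρ : Measure ((X × V₁) × V₂)) : ρ.map (Prod.fst ∘ E) = ρ.fst.fst :=
    (Measure.map_map measurable_fst measurable_fst).symm
  have hlast (ρ : Measure ((X × V₁) × V₂)) :
      ρ.map (F ∘ E) = (ρ.map (Prod.map F₁ id)).map F₂ := by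
    rw [hFE, Measure.map_map hF₂ (by fun_prop)]
  simp only [reqSupply_eq_iInf_klDiv_of_measurableEquiv hF R Φ Ψ E hE, hfst, hlast]

theorem reqSupply_series_le_add [StandardBorelSpace V] [StandardBorelSpace V₁]
    [StandardBorelSpace V₂] (he : MeasurePreserving e (R₁.prod R₂) R)
    (hF₁ : Measurable F₁) (hF₂ : Measurable F₂)
    (hseries : ∀ x v₁ v₂, F (x, e (v₁, v₂)) = F₂ (F₁ (x, v₁), v₂))
    (Φ Θ Ψ : Measure X) [IsFiniteMeasure Φ] [IsFiniteMeasure Θ] :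
    reqSupply F R Φ Ψ ≤ reqSupply F₁ R₁ Φ Θ + reqSupply F₂ R₂ Θ Ψ := by
  have : Nonempty V₂ := nonempty_of_isProbabilityMeasure R₂
  rw [reqSupply_series_eq_iInf_klDiv he hF₁ hF₂ hseries, reqSupply_eq_iInf_klDiv F₁,
    reqSupply_eq_iInf_klDiv F₂]
  simp only [ENNReal.iInf_add, ENNReal.add_iInf, le_iInf_iff]
  rintro π₂ hfst₂ hlast₂ π₁ hfst₁ hlast₁
  have : IsFiniteMeasure π₁.fst := by rwa [hfst₁]
  have : IsFiniteMeasure π₁ := isFiniteMeasure_of_fst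
  have : IsFiniteMeasure π₂.fst := by rwa [hfst₂]
  have : IsFiniteMeasure π₂ := isFiniteMeasure_of_fst
  obtain ⟨ρ, _, hρ₁, hρ₂, hcost⟩ := exists_gluing_klDiv_eq hF₁ (hfst₂.trans hlast₁.symm) R₂
  refine iInf₂_le_of_le ρ (by rw [hρ₁, hfst₁]) <| iInf_le_of_le (by rw [hρ₂, hlast₂]) ?_
  rw [klDiv_prod_eq_add, hρ₁, hcost, hfst₂]

theorem add_reqSupply_le_klDiv_of_series [StandardBorelSpace V₁] [StandardBorelSpace V₂]
    (hF₁ : Measurable F₁) (ρ : Measure ((X × V₁) × V₂)) [IsFiniteMeasure ρ] :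
    reqSupply F₁ R₁ ρ.fst.fst (ρ.fst.map F₁)
        + reqSupply F₂ R₂ (ρ.fst.map F₁) ((ρ.map (Prod.map F₁ id)).map F₂)
      ≤ InformationTheory.klDiv ρ ((ρ.fst.fst.prod R₁).prod R₂) := by
  have : Nonempty V₂ := nonempty_of_isProbabilityMeasure R₂
  have hF₁id : Measurable (Prod.map F₁ id : (X × V₁) × V₂ → X × V₂) := hF₁.prodMap measurable_id
  have hfst : (ρ.map (Prod.map F₁ id)).fst = ρ.fst.map F₁ := by
    rw [Measure.fst, Measure.fst, Measure.map_map measurable_fst hF₁id,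
      Measure.map_map hF₁ measurable_fst]
    rfl
  have hfirst : reqSupply F₁ R₁ ρ.fst.fst (ρ.fst.map F₁)
      ≤ InformationTheory.klDiv ρ.fst (ρ.fst.fst.prod R₁) := by
    rw [reqSupply_eq_iInf_klDiv]
    exact iInf₂_le_of_le ρ.fst rfl <| iInf_le_of_le rfl le_rfl
  have hsecond : reqSupply F₂ R₂ (ρ.fst.map F₁) ((ρ.map (Prod.map F₁ id)).map F₂)
      ≤ InformationTheory.klDiv ρ (ρ.fst.prod R₂) :=
    calc reqSupply F₂ R₂ (ρ.fst.map F₁) ((ρ.map (Prod.map F₁ id)).map F₂)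
      _ ≤ InformationTheory.klDiv (ρ.map (Prod.map F₁ id)) ((ρ.fst.map F₁).prod R₂) := by
        rw [reqSupply_eq_iInf_klDiv]
        exact iInf₂_le_of_le (ρ.map (Prod.map F₁ id)) hfst <| iInf_le_of_le rfl le_rfl
      _ = InformationTheory.klDiv (ρ.map (Prod.map F₁ id))
          ((ρ.fst.prod R₂).map (Prod.map F₁ id)) := by
        rw [← Measure.map_prod_map _ _ hF₁ measurable_id, Measure.map_id]
      _ ≤ InformationTheory.klDiv ρ (ρ.fst.prod R₂) := InformationTheory.klDiv_map_le _ _ hF₁id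
  rw [klDiv_prod_eq_add]
  exact add_le_add hfirst hsecond

theorem reqSupply_series_eq_iInf_add [StandardBorelSpace V] [StandardBorelSpace V₁]
    [StandardBorelSpace V₂] (he : MeasurePreserving e (R₁.prod R₂) R)
    (hF₁ : Measurable F₁) (hF₂ : Measurable F₂)
    (hseries : ∀ x v₁ v₂, F (x, e (v₁, v₂)) = F₂ (F₁ (x, v₁), v₂))
    (Φ Ψ : Measure X) [IsProbabilityMeasure Φ] :
    reqSupply F R Φ Ψ = ⨅ (Θ : Measure X) (_ : IsProbabilityMeasure Θ),
      reqSupply F₁ R₁ Φ Θ + reqSupply F₂ R₂ Θ Ψ := by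
  refine le_antisymm
    (le_iInf₂ fun Θ _ ↦ reqSupply_series_le_add he hF₁ hF₂ hseries Φ Θ Ψ) ?_
  rw [reqSupply_series_eq_iInf_klDiv he hF₁ hF₂ hseries]
  refine le_iInf₂ fun ρ hΦ ↦ le_iInf fun hΨ ↦ ?_
  have : IsProbabilityMeasure ρ :=
    ⟨by rw [← Measure.fst_univ, ← Measure.fst_univ, hΦ, measure_univ]⟩
  refine iInf₂_le_of_le (ρ.fst.map F₁)
    (Measure.isProbabilityMeasure_map hF₁.aemeasurable) ?_
  simpa only [hΦ, hΨ] using add_reqSupply_le_klDiv_of_series (F₂ := F₂) hF₁ ρ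

end Series

section StateTransition

variable {X W : Type*}

lemma stateTrans_snoc (f : X × W → X) {t : ℕ} (x : X) (w : Fin t → W) (v : W) :
    stateTrans f (t + 1) (x, Fin.snoc w v) = f (stateTrans f t (x, w), v) := by
  simp only [stateTrans, Fin.snoc_castSucc, Fin.snoc_last]

lemma stateTrans_append (f : X × W → X) {s r : ℕ} (x : X) (a : Fin s → W) (b : Fin r → W) :
    stateTrans f (s + r) (x, Fin.append a b) = stateTrans f r (stateTrans f s (x, a), b) := by
  induction b using Fin.snocInduction with
  | elim0 => rw [Fin.append_elim0]; rfl
  | snoc b v ih =>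
    rw [Fin.append_snoc, stateTrans_snoc, ← ih]
    exact stateTrans_snoc f x (Fin.append a b) v

lemma measurable_stateTrans [MeasurableSpace X] [MeasurableSpace W] {f : X × W → X}
    (hf : Measurable f) (t : ℕ) : Measurable (stateTrans f t) := by
  induction t with
  | zero => exact measurable_fst
  | succ t ih =>
    change Measurable fun p : X × (Fin (t + 1) → W) ↦
      f (stateTrans f t (p.1, fun i ↦ p.2 i.castSucc), p.2 (Fin.last t))
    fun_prop

/-- Concatenation `Fin.append` of sequences of lengths `s` and `r`, as a measurable equivalence. -/
def appendMeasurableEquiv (W : Type*) [MeasurableSpace W] (s r : ℕ) :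
    (Fin s → W) × (Fin r → W) ≃ᵐ (Fin (s + r) → W) :=
  (MeasurableEquiv.sumPiEquivProdPi fun _ ↦ W).symm.trans
    (MeasurableEquiv.piCongrLeft (fun _ ↦ W) finSumFinEquiv)

lemma appendMeasurableEquiv_apply [MeasurableSpace W] {s r : ℕ} (a : Fin s → W) (b : Fin r → W) :
    appendMeasurableEquiv W s r (a, b) = Fin.append a b := by
  funext i
  induction i using Fin.addCases with
  | left i =>
    rw [Fin.append_left]
    exact Equiv.piCongrLeft_sumInl (fun _ ↦ W) finSumFinEquiv a b i
  | right i =>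
    rw [Fin.append_right]
    exact Equiv.piCongrLeft_sumInr (fun _ ↦ W) finSumFinEquiv a b i

lemma measurePreserving_appendMeasurableEquiv [MeasurableSpace W] (R : Measure W) [SigmaFinite R]
    (s r : ℕ) :
    MeasurePreserving (appendMeasurableEquiv W s r)
      ((Measure.pi fun _ : Fin s ↦ R).prod (Measure.pi fun _ : Fin r ↦ R))
      (Measure.pi fun _ : Fin (s + r) ↦ R) :=
  (measurePreserving_piCongrLeft (fun _ ↦ R) finSumFinEquiv).comp
    (measurePreserving_sumPiEquivProdPi_symm fun _ ↦ R)

end StateTransition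

theorem bellman_composition_general {X W : Type*} [MeasurableSpace X] [MeasurableSpace W]
    [StandardBorelSpace W] (R : Measure W) [IsProbabilityMeasure R] {f : X × W → X}
    (hf : Measurable f) (s r : ℕ) (Φ Ψ : Measure X) [IsProbabilityMeasure Φ] :
    reqSupply (stateTrans f (s + r)) (Measure.pi fun _ : Fin (s + r) ↦ R) Φ Ψ
      = ⨅ (Θ : Measure X) (_ : IsProbabilityMeasure Θ),
          reqSupply (stateTrans f s) (Measure.pi fun _ : Fin s ↦ R) Φ Θ
            + reqSupply (stateTrans f r) (Measure.pi fun _ : Fin r ↦ R) Θ Ψ := by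
  refine reqSupply_series_eq_iInf_add (measurePreserving_appendMeasurableEquiv R s r)
    (measurable_stateTrans hf s) (measurable_stateTrans hf r) (fun x a b ↦ ?_) Φ Ψ
  rw [appendMeasurableEquiv_apply, stateTrans_append]

/-- Dynamic programming for the minimum required conditional relative entropy supply:
`J_t(Φ, Ψ) = inf_Θ (J_s(Φ, Θ) + J_{t-s}(Θ, Ψ))`, the infimum over all intermediate
probability distributions `Θ`. -/
theorem bellman_composition
    {𝒳 𝒲 : Type*} [MeasurableSpace 𝒳] [StandardBorelSpace 𝒳]
    [MeasurableSpace 𝒲] [StandardBorelSpace 𝒲]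
    (R : Measure 𝒲) [IsProbabilityMeasure R]
    (f : 𝒳 × 𝒲 → 𝒳) (hf : Measurable f)
    (s t : ℕ) (hs : 0 < s) (hst : s < t)
    (Φ Ψ : Measure 𝒳) [IsProbabilityMeasure Φ] [IsProbabilityMeasure Ψ] :
    reqSupply (stateTrans f t) (Measure.pi fun _ : Fin t => R) Φ Ψ
      = ⨅ (Θ : Measure 𝒳) (_ : IsProbabilityMeasure Θ),
          reqSupply (stateTrans f s) (Measure.pi fun _ : Fin s => R) Φ Θ
            + reqSupply (stateTrans f (t - s)) (Measure.pi fun _ : Fin (t - s) => R) Θ Ψ := by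
  obtain ⟨r, rfl⟩ := Nat.exists_eq_add_of_le hst.le
  rw [Nat.add_sub_cancel_left]
  exact bellman_composition_general R hf s r Φ Ψ
end

section
/- Let P be a probability measure on ℝ^r with finite second moments which is absolutely continuous with respect to Lebesgue measure; let m ∈ ℝ^r be its mean vector and K ∈ ℝ^{r×r} its covariance matrix, and assume K is positive definite. Let a ∈ ℝ^r and let C ∈ ℝ^{r×r} be symmetric positive definite. Then D(P ‖ N(a, C)) ≥ (1/2) ( (m − a)ᵀ C⁻¹ (m − a) + tr(C⁻¹ K) − log det(C⁻¹ K) − r ), and equality holds if and only if P = N(m, K), i.e. if and only if P is Gaussian. -/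
open MeasureTheory ProbabilityTheory Matrix
open scoped ENNReal ProbabilityTheory Classical

/-- The Gaussian (multivariate normal) measure `N(a, C)` on `ℝ^r`, with mean vector `a` and
positive definite covariance matrix `C`, given by its density
`(2π)^{-r/2} (det C)^{-1/2} exp(-½ (x-a)ᵀ C⁻¹ (x-a))` with respect to Lebesgue measure. -/
noncomputable def gaussianPi {r : ℕ} (a : Fin r → ℝ) (C : Matrix (Fin r) (Fin r) ℝ) :
    Measure (Fin r → ℝ) :=
  volume.withDensity fun x =>
    ENNReal.ofReal (Real.sqrt (((2 * Real.pi) ^ r * C.det)⁻¹) *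
      Real.exp (-(1 / 2) * ((x - a) ⬝ᵥ (C⁻¹ *ᵥ (x - a)))))

/-- The pair `(A, B)` is reachable: the controllability matrix
`[B, AB, …, A^{n-1}B]` has rank `n`. -/
def IsReachablePair {n m : ℕ} (A : Matrix (Fin n) (Fin n) ℝ)
    (B : Matrix (Fin n) (Fin m) ℝ) : Prop :=
  (Matrix.of fun (i : Fin n) (p : Fin n × Fin m) => (A ^ (p.1 : ℕ) * B) i p.2).rank = n

/-!
Let `G = N(m, K)` and `Q = N(a, C)`. These measures are equivalent, so
`log (dP/dQ) = log (dP/dG) + log (dG/dQ)` almost everywhere for `P`, and `log (dG/dQ)` is a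
polynomial of degree two. Its integral against `P` therefore depends only on the mean and the
covariance matrix of `P`, and equals the right-hand side `R` of the bound. This gives the
Pythagorean identity `D(P ‖ Q) = D(P ‖ G) + R`, and the theorem follows from Gibbs' inequality
`D(P ‖ G) ≥ 0` and its equality case.
-/

section LogDet

variable {n : Type*} [Fintype n] [DecidableEq n]

open scoped MatrixOrder in
lemma exists_isUnit_eq_transpose_mul_self {A : Matrix n n ℝ} (hA : A.PosDef) :
    ∃ B : Matrix n n ℝ, IsUnit B ∧ A = Bᵀ * B := by
  simpa only [star_eq_conjTranspose, conjTranspose_eq_transpose_of_trivial] using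
    CStarAlgebra.isStrictlyPositive_iff_eq_star_mul_self.mp hA.isStrictlyPositive

lemma log_det_inv_mul {A K : Matrix n n ℝ} (hA : A.det ≠ 0) (hK : K.det ≠ 0) :
    Real.log (A⁻¹ * K).det = Real.log K.det - Real.log A.det := by
  rw [det_mul, det_nonsing_inv, Ring.inverse_eq_inv', inv_mul_eq_div, Real.log_div hK hA]

lemma log_det_le_trace_sub_card {M : Matrix n n ℝ} (hM : M.PosDef) :
    Real.log M.det ≤ M.trace - Fintype.card n := by
  have hpos := hM.eigenvalues_pos
  calc Real.log M.det = ∑ i, Real.log (hM.1.eigenvalues i) := by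
        rw [hM.1.det_eq_prod_eigenvalues, RCLike.ofReal_real_eq_id]
        exact Real.log_prod fun i _ ↦ (hpos i).ne'
    _ ≤ ∑ i, (hM.1.eigenvalues i - 1) :=
        Finset.sum_le_sum fun i _ ↦ Real.log_le_sub_one_of_pos (hpos i)
    _ = M.trace - Fintype.card n := by
        simp [hM.1.trace_eq_sum_eigenvalues]

lemma log_det_mul_le_trace_mul_sub_card {A K : Matrix n n ℝ} (hA : A.PosDef) (hK : K.PosDef) :
    Real.log (A * K).det ≤ (A * K).trace - Fintype.card n := by
  obtain ⟨B, hB, rfl⟩ := exists_isUnit_eq_transpose_mul_self hA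
  have hM : (B * K * Bᵀ).PosDef := by
    rw [← conjTranspose_eq_transpose_of_trivial]
    exact hK.mul_mul_conjTranspose_same (vecMul_injective_of_isUnit hB)
  have hdet : (Bᵀ * B * K).det = (B * K * Bᵀ).det := by
    simp only [det_mul]
    ring
  have htrace : (Bᵀ * B * K).trace = (B * K * Bᵀ).trace := by
    rw [trace_mul_comm (B * K), Matrix.mul_assoc]
  rw [hdet, htrace]
  exact log_det_le_trace_sub_card hM

end LogDet

section GaussianIntegral

variable {n : Type*} [Fintype n]

lemma integral_exp_neg_half_dotProduct_self :
    ∫ x : n → ℝ, Real.exp (-(1 / 2) * (x ⬝ᵥ x)) = √((2 * Real.pi) ^ Fintype.card n) := by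
  have hprod (x : n → ℝ) :
      Real.exp (-(1 / 2) * (x ⬝ᵥ x)) = ∏ i, Real.exp (-(1 / 2) * x i ^ 2) := by
    simp only [← Real.exp_sum, dotProduct, Finset.mul_sum, sq]
  simp_rw [hprod]
  rw [integral_fintype_prod_volume_eq_pow fun y : ℝ ↦ Real.exp (-(1 / 2) * y ^ 2),
    integral_gaussian, div_div_eq_mul_div, div_one, mul_comm Real.pi 2]
  exact ((Real.sqrt_eq_iff_mul_self_eq_of_pos (by positivity)).mpr
    (by rw [← mul_pow, Real.mul_self_sqrt (by positivity)])).symm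

variable [DecidableEq n]

lemma integral_comp_mulVec {E : Type*} [NormedAddCommGroup E] [NormedSpace ℝ E]
    {B : Matrix n n ℝ} (hB : IsUnit B) (f : (n → ℝ) → E) :
    ∫ x, f (B *ᵥ x) = |B.det|⁻¹ • ∫ x, f x := by
  have hdet : B.det ≠ 0 := ((isUnit_iff_isUnit_det B).mp hB).ne_zero
  have hemb : MeasurableEmbedding (toLin' B) :=
    (toLin' B).continuous_of_finiteDimensional.measurableEmbedding (mulVec_injective_of_isUnit hB)
  calc ∫ x, f (B *ᵥ x) = ∫ y, f y ∂(Measure.map (toLin' B) volume) := (hemb.integral_map f).symm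
    _ = |B.det|⁻¹ • ∫ x, f x := by
      rw [Real.map_matrix_volume_pi_eq_smul_volume_pi hdet, integral_smul_measure,
        ENNReal.toReal_ofReal (abs_nonneg _), abs_inv]

lemma integral_exp_neg_half_dotProduct_mulVec {A : Matrix n n ℝ} (hA : A.PosDef) :
    ∫ x : n → ℝ, Real.exp (-(1 / 2) * (x ⬝ᵥ (A *ᵥ x)))
      = √((2 * Real.pi) ^ Fintype.card n / A.det) := by
  obtain ⟨B, hB, rfl⟩ := exists_isUnit_eq_transpose_mul_self hA
  have hquad (x : n → ℝ) : x ⬝ᵥ ((Bᵀ * B) *ᵥ x) = (B *ᵥ x) ⬝ᵥ (B *ᵥ x) := by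
    rw [← mulVec_mulVec, dotProduct_mulVec, vecMul_transpose]
  simp_rw [hquad]
  rw [integral_comp_mulVec hB fun y ↦ Real.exp (-(1 / 2) * (y ⬝ᵥ y)),
    integral_exp_neg_half_dotProduct_self, det_mul, det_transpose, ← sq,
    Real.sqrt_div (by positivity), Real.sqrt_sq_eq_abs, smul_eq_mul, inv_mul_eq_div]

end GaussianIntegral

section SecondMoments

variable {n : Type*} [Fintype n]

lemma dotProduct_mulVec_eq_sum (A : Matrix n n ℝ) (v : n → ℝ) :
    v ⬝ᵥ (A *ᵥ v) = ∑ i, ∑ j, A i j * (v i * v j) := by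
  simp only [dotProduct, mulVec, Finset.mul_sum]
  exact Finset.sum_congr rfl fun i _ ↦ Finset.sum_congr rfl fun j _ ↦ by ring

variable {Ω : Type*} {mΩ : MeasurableSpace Ω} {μ : Measure Ω} {X : Ω → n → ℝ}

lemma integrable_sub_dotProduct_mulVec_sub [IsFiniteMeasure μ]
    (hX : ∀ i, MemLp (fun ω ↦ X ω i) 2 μ) (A : Matrix n n ℝ) (a : n → ℝ) :
    Integrable (fun ω ↦ (X ω - a) ⬝ᵥ (A *ᵥ (X ω - a))) μ := by
  simp_rw [dotProduct_mulVec_eq_sum]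
  exact integrable_finsetSum _ fun i _ ↦ integrable_finsetSum _ fun j _ ↦
    (((hX i).sub (memLp_const _)).integrable_mul ((hX j).sub (memLp_const _))).const_mul _

variable [IsProbabilityMeasure μ]

lemma integral_sub_const_mul_sub_const {X Y : Ω → ℝ} (hX : MemLp X 2 μ) (hY : MemLp Y 2 μ)
    (a b : ℝ) :
    ∫ ω, (X ω - a) * (Y ω - b) ∂μ = cov[X, Y; μ] + (μ[X] - a) * (μ[Y] - b) := by
  have hcov := covariance_eq_sub (hX.sub (memLp_const a)) (hY.sub (memLp_const b))
  have hX1 := hX.integrable one_le_two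
  have hY1 := hY.integrable one_le_two
  have hcov' : cov[X - fun _ ↦ a, Y - fun _ ↦ b; μ] = cov[X, Y; μ] :=
    (covariance_sub_const_left hX1 a).trans (covariance_sub_const_right hY1 b)
  have hXm : ∫ ω, (X ω - a) ∂μ = μ[X] - a := by simp [integral_sub hX1]
  have hYm : ∫ ω, (Y ω - b) ∂μ = μ[Y] - b := by simp [integral_sub hY1]
  simp only [hcov', Pi.mul_apply, Pi.sub_apply, hXm, hYm] at hcov
  linarith

lemma integral_sub_dotProduct_mulVec_sub (hX : ∀ i, MemLp (fun ω ↦ X ω i) 2 μ)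
    {m : n → ℝ} (hm : ∀ i, m i = ∫ ω, X ω i ∂μ) {K : Matrix n n ℝ}
    (hK : ∀ i j, K i j = cov[fun ω ↦ X ω i, fun ω ↦ X ω j; μ])
    (A : Matrix n n ℝ) (a : n → ℝ) :
    ∫ ω, (X ω - a) ⬝ᵥ (A *ᵥ (X ω - a)) ∂μ
      = (m - a) ⬝ᵥ (A *ᵥ (m - a)) + (A * K).trace := by
  have hint (i j : n) : Integrable (fun ω ↦ A i j * ((X ω - a) i * (X ω - a) j)) μ :=
    (((hX i).sub (memLp_const _)).integrable_mul ((hX j).sub (memLp_const _))).const_mul _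
  have hentry (i j : n) :
      ∫ ω, (X ω - a) i * (X ω - a) j ∂μ = K j i + (m - a) i * (m - a) j := by
    simp only [Pi.sub_apply]
    rw [integral_sub_const_mul_sub_const (hX i) (hX j), hm, hm, hK, covariance_comm]
  have htrace : (A * K).trace = ∑ i, ∑ j, A i j * K j i := rfl
  simp_rw [dotProduct_mulVec_eq_sum]
  rw [integral_finsetSum _ fun i _ ↦ integrable_finsetSum _ fun j _ ↦ hint i j]
  simp_rw [integral_finsetSum _ fun j _ ↦ hint _ j, integral_const_mul, hentry, mul_add,
    Finset.sum_add_distrib]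
  rw [add_comm, htrace]

end SecondMoments

section RelativeEntropy

variable {α : Type*} {mα : MeasurableSpace α} {μ ν κ : Measure α}

lemma klDiv_eq_informationTheory_klDiv_s11 [IsFiniteMeasure μ] [IsFiniteMeasure ν] :
    klDiv μ ν = InformationTheory.klDiv μ ν := by
  simp only [klDiv, InformationTheory.klDiv_eq_lintegral_klFun, InformationTheory.klFun_apply,
    sub_add_eq_add_sub]

lemma llr_ae_eq_add_llr [SigmaFinite μ] [SigmaFinite ν] [SigmaFinite κ] (hμν : μ ≪ ν)
    (hνκ : ν ≪ κ) : llr μ κ =ᵐ[μ] fun x ↦ llr μ ν x + llr ν κ x := by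
  filter_upwards [(hμν.trans hνκ).ae_le (Measure.rnDeriv_mul_rnDeriv (κ := κ) hμν),
    Measure.rnDeriv_pos hμν, hμν.ae_le (Measure.rnDeriv_lt_top μ ν),
    hμν.ae_le (Measure.rnDeriv_pos hνκ), (hμν.trans hνκ).ae_le (Measure.rnDeriv_lt_top ν κ)]
    with x hmul hμpos hμtop hνpos hνtop
  rw [llr, llr, llr, ← hmul, Pi.mul_apply, ENNReal.toReal_mul,
    Real.log_mul (ENNReal.toReal_pos hμpos.ne' hμtop.ne).ne'
      (ENNReal.toReal_pos hνpos.ne' hνtop.ne).ne']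

lemma llr_withDensity_withDensity [SigmaFinite μ] {f g : α → ℝ} (hf : Measurable f)
    (hg : Measurable g) (hfpos : ∀ x, 0 < f x) (hgpos : ∀ x, 0 < g x) :
    llr (μ.withDensity fun x ↦ ENNReal.ofReal (f x))
        (μ.withDensity fun x ↦ ENNReal.ofReal (g x))
      =ᵐ[μ] fun x ↦ Real.log (f x) - Real.log (g x) := by
  have : SigmaFinite (μ.withDensity fun x ↦ ENNReal.ofReal (f x)) :=
    SigmaFinite.withDensity_of_ne_top (.of_forall fun _ ↦ ENNReal.ofReal_ne_top)
  filter_upwards [Measure.rnDeriv_withDensity_right (μ.withDensity fun x ↦ ENNReal.ofReal (f x)) μ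
      hg.ennreal_ofReal.aemeasurable (.of_forall fun x ↦ (ENNReal.ofReal_pos.mpr (hgpos x)).ne')
      (.of_forall fun _ ↦ ENNReal.ofReal_ne_top),
    Measure.rnDeriv_withDensity μ hf.ennreal_ofReal] with x hright hleft
  rw [llr, hright, hleft, ENNReal.toReal_mul, ENNReal.toReal_inv,
    ENNReal.toReal_ofReal (hfpos x).le, ENNReal.toReal_ofReal (hgpos x).le, inv_mul_eq_div,
    Real.log_div (hfpos x).ne' (hgpos x).ne']

lemma klDiv_eq_klDiv_add_integral [IsFiniteMeasure μ] [IsFiniteMeasure ν] [IsFiniteMeasure κ]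
    (hmass : ν Set.univ = κ Set.univ) (hνκ : ν ≪ κ) (hκν : κ ≪ ν)
    {l : α → ℝ} (hl : llr ν κ =ᵐ[ν] l) (hint : Integrable l μ) (hnonneg : 0 ≤ ∫ x, l x ∂μ) :
    InformationTheory.klDiv μ κ
      = InformationTheory.klDiv μ ν + ENNReal.ofReal (∫ x, l x ∂μ) := by
  by_cases hμν : μ ≪ ν
  swap
  · rw [InformationTheory.klDiv_of_not_ac hμν,
      InformationTheory.klDiv_of_not_ac fun hμκ ↦ hμν (hμκ.trans hκν), top_add]
  have hllr : llr μ κ =ᵐ[μ] fun x ↦ llr μ ν x + l x := by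
    filter_upwards [llr_ae_eq_add_llr hμν hνκ, hμν.ae_le hl] with x hadd hx
    rw [hadd, hx]
  have hiff : Integrable (llr μ κ) μ ↔ Integrable (llr μ ν) μ := by
    rw [integrable_congr hllr, integrable_add_iff_integrable_left' hint]
  by_cases hμν_int : Integrable (llr μ ν) μ
  · rw [InformationTheory.klDiv_of_ac_of_integrable (hμν.trans hνκ) (hiff.mpr hμν_int),
      InformationTheory.klDiv_of_ac_of_integrable hμν hμν_int, ← ENNReal.ofReal_add
        (InformationTheory.integral_llr_add_sub_measure_univ_nonneg hμν hμν_int) hnonneg,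
      integral_congr_ae hllr, integral_add hμν_int hint, measureReal_def κ, ← hmass,
      ← measureReal_def]
    congr 1
    ring
  · rw [InformationTheory.klDiv_of_not_integrable hμν_int,
      InformationTheory.klDiv_of_not_integrable (hiff.not.mpr hμν_int), top_add]

end RelativeEntropy

section Gaussian

variable {r : ℕ} {m a : Fin r → ℝ} {K C : Matrix (Fin r) (Fin r) ℝ}

/-- The density of `gaussianPi a C` with respect to Lebesgue measure, real-valued so that its
logarithm can be taken. -/
noncomputable def gaussianPiPDFReal (a : Fin r → ℝ) (C : Matrix (Fin r) (Fin r) ℝ)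
    (x : Fin r → ℝ) : ℝ :=
  √(((2 * Real.pi) ^ r * C.det)⁻¹) * Real.exp (-(1 / 2) * ((x - a) ⬝ᵥ (C⁻¹ *ᵥ (x - a))))

lemma gaussianPi_eq_withDensity (a : Fin r → ℝ) (C : Matrix (Fin r) (Fin r) ℝ) :
    gaussianPi a C = volume.withDensity fun x ↦ ENNReal.ofReal (gaussianPiPDFReal a C x) := rfl

lemma gaussianPiPDFReal_pos (a : Fin r → ℝ) (hC : C.PosDef) (x : Fin r → ℝ) :
    0 < gaussianPiPDFReal a C x := by
  have := hC.det_pos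
  unfold gaussianPiPDFReal
  positivity

lemma measurable_gaussianPiPDFReal (a : Fin r → ℝ) (C : Matrix (Fin r) (Fin r) ℝ) :
    Measurable (gaussianPiPDFReal a C) := by
  unfold gaussianPiPDFReal
  simp only [dotProduct, mulVec]
  fun_prop

lemma log_gaussianPiPDFReal (a : Fin r → ℝ) (hC : C.PosDef) (x : Fin r → ℝ) :
    Real.log (gaussianPiPDFReal a C x)
      = -(1 / 2) * (r * Real.log (2 * Real.pi) + Real.log C.det
          + (x - a) ⬝ᵥ (C⁻¹ *ᵥ (x - a))) := by
  have hdet := hC.det_pos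
  rw [gaussianPiPDFReal, Real.log_mul (by positivity) (by positivity), Real.log_exp,
    Real.log_sqrt (by positivity), Real.log_inv, Real.log_mul (by positivity) hdet.ne',
    Real.log_pow]
  ring

lemma integral_gaussianPiPDFReal (a : Fin r → ℝ) (hC : C.PosDef) :
    ∫ x, gaussianPiPDFReal a C x = 1 := by
  have hdet := hC.det_pos
  simp_rw [gaussianPiPDFReal, integral_const_mul]
  rw [integral_sub_right_eq_self fun x ↦ Real.exp (-(1 / 2) * (x ⬝ᵥ (C⁻¹ *ᵥ x))),
    integral_exp_neg_half_dotProduct_mulVec hC.inv, ← Real.sqrt_mul (by positivity),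
    Fintype.card_fin, det_nonsing_inv, Ring.inverse_eq_inv', div_inv_eq_mul,
    inv_mul_cancel₀ (by positivity), Real.sqrt_one]

lemma isProbabilityMeasure_gaussianPi (a : Fin r → ℝ) (hC : C.PosDef) :
    IsProbabilityMeasure (gaussianPi a C) := by
  have hone := integral_gaussianPiPDFReal a hC
  constructor
  rw [gaussianPi_eq_withDensity, withDensity_apply _ MeasurableSet.univ, Measure.restrict_univ,
    ← ofReal_integral_eq_lintegral_ofReal (.of_integral_ne_zero (by simp [hone]))
      (.of_forall fun x ↦ (gaussianPiPDFReal_pos a hC x).le), hone, ENNReal.ofReal_one]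

lemma gaussianPi_absolutelyContinuous_volume (a : Fin r → ℝ) (C : Matrix (Fin r) (Fin r) ℝ) :
    gaussianPi a C ≪ volume :=
  withDensity_absolutelyContinuous _ _

lemma volume_absolutelyContinuous_gaussianPi (a : Fin r → ℝ) (hC : C.PosDef) :
    volume ≪ gaussianPi a C :=
  withDensity_absolutelyContinuous'
    (measurable_gaussianPiPDFReal a C).ennreal_ofReal.aemeasurable
    (.of_forall fun x ↦ (ENNReal.ofReal_pos.mpr (gaussianPiPDFReal_pos a hC x)).ne')

lemma gaussianPi_absolutelyContinuous_gaussianPi (m a : Fin r → ℝ)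
    (K : Matrix (Fin r) (Fin r) ℝ) (hC : C.PosDef) : gaussianPi m K ≪ gaussianPi a C :=
  (gaussianPi_absolutelyContinuous_volume m K).trans (volume_absolutelyContinuous_gaussianPi a hC)

lemma llr_gaussianPi (m a : Fin r → ℝ) (hK : K.PosDef) (hC : C.PosDef) :
    llr (gaussianPi m K) (gaussianPi a C) =ᵐ[volume]
      fun x ↦ Real.log (gaussianPiPDFReal m K x) - Real.log (gaussianPiPDFReal a C x) :=
  llr_withDensity_withDensity (measurable_gaussianPiPDFReal m K)
    (measurable_gaussianPiPDFReal a C) (gaussianPiPDFReal_pos m hK) (gaussianPiPDFReal_pos a hC)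

/-- The right-hand side of the lower bound, which is the closed form of the relative entropy
`D(N(m, K) ‖ N(a, C))` for positive definite `K` and `C`. -/
noncomputable def gaussianRelEntropy (m : Fin r → ℝ) (K : Matrix (Fin r) (Fin r) ℝ)
    (a : Fin r → ℝ) (C : Matrix (Fin r) (Fin r) ℝ) : ℝ :=
  (1 / 2) * ((m - a) ⬝ᵥ (C⁻¹ *ᵥ (m - a)) + (C⁻¹ * K).trace - Real.log (C⁻¹ * K).det - r)

lemma gaussianRelEntropy_nonneg (m a : Fin r → ℝ) (hK : K.PosDef) (hC : C.PosDef) :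
    0 ≤ gaussianRelEntropy m K a C := by
  have hmean : 0 ≤ (m - a) ⬝ᵥ (C⁻¹ *ᵥ (m - a)) := by
    simpa using hC.inv.posSemidef.dotProduct_mulVec_nonneg (m - a)
  have hcov := log_det_mul_le_trace_mul_sub_card hC.inv hK
  rw [Fintype.card_fin] at hcov
  rw [gaussianRelEntropy]
  linarith

variable {P : Measure (Fin r → ℝ)}

lemma integrable_log_gaussianPiPDFReal [IsFiniteMeasure P] (hP : ∀ i, MemLp (fun x ↦ x i) 2 P)
    (a : Fin r → ℝ) (hC : C.PosDef) :
    Integrable (fun x ↦ Real.log (gaussianPiPDFReal a C x)) P := by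
  simp_rw [log_gaussianPiPDFReal a hC]
  exact ((integrable_const _).add
    (integrable_sub_dotProduct_mulVec_sub hP C⁻¹ a)).const_mul _

variable [IsProbabilityMeasure P]

lemma integral_log_gaussianPiPDFReal (hP : ∀ i, MemLp (fun x ↦ x i) 2 P)
    (hm : ∀ i, m i = ∫ x, x i ∂P) (hK : ∀ i j, K i j = cov[fun x ↦ x i, fun x ↦ x j; P])
    (a : Fin r → ℝ) (hC : C.PosDef) :
    ∫ x, Real.log (gaussianPiPDFReal a C x) ∂P
      = -(1 / 2) * (r * Real.log (2 * Real.pi) + Real.log C.det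
          + ((m - a) ⬝ᵥ (C⁻¹ *ᵥ (m - a)) + (C⁻¹ * K).trace)) := by
  simp_rw [log_gaussianPiPDFReal a hC]
  rw [integral_const_mul, integral_add (integrable_const _)
    (integrable_sub_dotProduct_mulVec_sub hP C⁻¹ a), integral_const, probReal_univ, one_smul,
    integral_sub_dotProduct_mulVec_sub hP hm hK]

lemma integral_log_gaussianPiPDFReal_sub (hP : ∀ i, MemLp (fun x ↦ x i) 2 P)
    (hm : ∀ i, m i = ∫ x, x i ∂P) (hK : ∀ i j, K i j = cov[fun x ↦ x i, fun x ↦ x j; P])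
    (hKpd : K.PosDef) (a : Fin r → ℝ) (hC : C.PosDef) :
    ∫ x, (Real.log (gaussianPiPDFReal m K x) - Real.log (gaussianPiPDFReal a C x)) ∂P
      = gaussianRelEntropy m K a C := by
  rw [integral_sub (integrable_log_gaussianPiPDFReal hP m hKpd)
      (integrable_log_gaussianPiPDFReal hP a hC),
    integral_log_gaussianPiPDFReal hP hm hK m hKpd, integral_log_gaussianPiPDFReal hP hm hK a hC,
    gaussianRelEntropy, log_det_inv_mul hC.det_pos.ne' hKpd.det_pos.ne', sub_self, zero_dotProduct,
    nonsing_inv_mul K ((isUnit_iff_isUnit_det K).mp hKpd.isUnit), trace_one, Fintype.card_fin]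
  ring

lemma klDiv_gaussianPi_eq_add (hP : ∀ i, MemLp (fun x ↦ x i) 2 P)
    (hm : ∀ i, m i = ∫ x, x i ∂P) (hK : ∀ i j, K i j = cov[fun x ↦ x i, fun x ↦ x j; P])
    (hKpd : K.PosDef) (a : Fin r → ℝ) (hC : C.PosDef) :
    klDiv P (gaussianPi a C)
      = klDiv P (gaussianPi m K) + ENNReal.ofReal (gaussianRelEntropy m K a C) := by
  have := isProbabilityMeasure_gaussianPi m hKpd
  have := isProbabilityMeasure_gaussianPi a hC
  have hint := (integrable_log_gaussianPiPDFReal hP m hKpd).sub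
    (integrable_log_gaussianPiPDFReal hP a hC)
  have hvalue := integral_log_gaussianPiPDFReal_sub hP hm hK hKpd a hC
  rw [klDiv_eq_informationTheory_klDiv_s11, klDiv_eq_informationTheory_klDiv_s11, ← hvalue]
  exact klDiv_eq_klDiv_add_integral (by simp)
    (gaussianPi_absolutelyContinuous_gaussianPi m a K hC)
    (gaussianPi_absolutelyContinuous_gaussianPi a m C hKpd)
    ((gaussianPi_absolutelyContinuous_volume m K).ae_le (llr_gaussianPi m a hKpd hC)) hint
    (hvalue ▸ gaussianRelEntropy_nonneg m a hKpd hC)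

end Gaussian

theorem klDiv_gaussian_lower_bound_general
    {r : ℕ} (P : Measure (Fin r → ℝ)) [IsProbabilityMeasure P]
    (hmom : ∀ i j, Integrable (fun x => x i * x j) P)
    (mv : Fin r → ℝ) (hm : ∀ i, mv i = ∫ x, x i ∂P)
    (K : Matrix (Fin r) (Fin r) ℝ)
    (hK : ∀ i j, K i j = ∫ x, (x i - mv i) * (x j - mv j) ∂P)
    (hKpd : K.PosDef)
    (a : Fin r → ℝ) (C : Matrix (Fin r) (Fin r) ℝ) (hC : C.PosDef) :
    ENNReal.ofReal ((1 / 2) * ((mv - a) ⬝ᵥ (C⁻¹ *ᵥ (mv - a)) + (C⁻¹ * K).trace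
        - Real.log (C⁻¹ * K).det - r)) ≤ klDiv P (gaussianPi a C) ∧
    (klDiv P (gaussianPi a C)
        = ENNReal.ofReal ((1 / 2) * ((mv - a) ⬝ᵥ (C⁻¹ *ᵥ (mv - a)) + (C⁻¹ * K).trace
            - Real.log (C⁻¹ * K).det - r))
      ↔ P = gaussianPi mv K) := by
  have := isProbabilityMeasure_gaussianPi mv hKpd
  have hP (i : Fin r) : MemLp (fun x ↦ x i) 2 P :=
    (memLp_two_iff_integrable_sq (measurable_pi_apply i).aestronglyMeasurable).mpr
      (by simpa only [sq] using hmom i i)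
  have hcov (i j : Fin r) : K i j = cov[fun x ↦ x i, fun x ↦ x j; P] := by
    rw [hK, hm, hm, covariance]
  have hadd := klDiv_gaussianPi_eq_add hP hm hcov hKpd a hC
  have hzero : klDiv P (gaussianPi mv K) = 0 ↔ P = gaussianPi mv K := by
    rw [klDiv_eq_informationTheory_klDiv_s11, InformationTheory.klDiv_eq_zero_iff]
  rw [← gaussianRelEntropy, hadd]
  refine ⟨le_add_self, Iff.trans ?_ hzero⟩
  simpa only [zero_add] using ENNReal.add_left_inj (c := 0) ENNReal.ofReal_ne_top

/-- Gaussian lower bound on relative entropy: for a probability measure `P` on `ℝ^r` with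
density, finite second moments, mean `mv` and positive definite covariance `K`,
`D(P ‖ N(a, C)) ≥ ½ ((mv−a)ᵀC⁻¹(mv−a) + tr(C⁻¹K) − log det(C⁻¹K) − r)`,
with equality iff `P = N(mv, K)`, i.e. iff `P` is Gaussian. -/
theorem klDiv_gaussian_lower_bound
    {r : ℕ} (P : Measure (Fin r → ℝ)) [IsProbabilityMeasure P]
    (hac : P ≪ volume)
    (hmom : ∀ i j, Integrable (fun x => x i * x j) P)
    (mv : Fin r → ℝ) (hm : ∀ i, mv i = ∫ x, x i ∂P)
    (K : Matrix (Fin r) (Fin r) ℝ)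
    (hK : ∀ i j, K i j = ∫ x, (x i - mv i) * (x j - mv j) ∂P)
    (hKpd : K.PosDef)
    (a : Fin r → ℝ) (C : Matrix (Fin r) (Fin r) ℝ) (hC : C.PosDef) :
    ENNReal.ofReal ((1 / 2) * ((mv - a) ⬝ᵥ (C⁻¹ *ᵥ (mv - a)) + (C⁻¹ * K).trace
        - Real.log (C⁻¹ * K).det - r)) ≤ klDiv P (gaussianPi a C) ∧
    (klDiv P (gaussianPi a C)
        = ENNReal.ofReal ((1 / 2) * ((mv - a) ⬝ᵥ (C⁻¹ *ᵥ (mv - a)) + (C⁻¹ * K).trace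
            - Real.log (C⁻¹ * K).det - r))
      ↔ P = gaussianPi mv K) :=
  klDiv_gaussian_lower_bound_general P hmom mv hm K hK hKpd a C hC
end
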